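/- Let v : ℝ → ℝ be a smooth function, and define the differential operators P and Q acting on smooth functions f : ℝ → ℝ by (P f)(t) = 4 f'''(t) + 3 v(t) f'(t) + (3/2) v'(t) f(t) and (Q f)(t) = 2 f''(t) + v(t) f(t). Then for every smooth f, (P(Q f) − Q(P f))(t) = (v'''(t) + 3 v(t) v'(t)) · f(t); i.e. the commutator [P, Q] is the operator of multiplication by v''' + 3 v v'. In particular, the string equation [P, Q] = g_s (a constant) holds if and only if v''' + 3 v v' is the constant function g_s. -/

import Mathlib

/-- The Lax operator `P = 4∂³ + 3v∂ + (3/2)v'` of the `(3,2)` model. -/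
noncomputable def laxP (v f : ℝ → ℝ) : ℝ → ℝ := fun t =>
  4 * iteratedDeriv 3 f t + 3 * v t * deriv f t + (3 / 2) * deriv v t * f t

/-- The Lax operator `Q = 2∂² + v` of the `(3,2)` model. -/
noncomputable def laxQ (v f : ℝ → ℝ) : ℝ → ℝ := fun t =>
  2 * iteratedDeriv 2 f t + v t * f t

theorem lax_hasDerivAt_iter (f : ℝ → ℝ) (hf : ContDiff ℝ (⊤ : ℕ∞) f) (n : ℕ) (t : ℝ) :
    HasDerivAt (iteratedDeriv n f) (iteratedDeriv (n + 1) f t) t := by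
  rw [iteratedDeriv_succ]
  have h : Differentiable ℝ (iteratedDeriv n f) :=
    hf.differentiable_iteratedDeriv n (by exact_mod_cast ENat.natCast_lt_top n)
  exact (h t).hasDerivAt

theorem lax_iter2 (g g1 g2 : ℝ → ℝ) (h1 : ∀ t, HasDerivAt g (g1 t) t)
    (h2 : ∀ t, HasDerivAt g1 (g2 t) t) : deriv g = g1 ∧ iteratedDeriv 2 g = g2 := by
  have e1 : deriv g = g1 := funext fun t => (h1 t).deriv
  have e2 : deriv g1 = g2 := funext fun t => (h2 t).deriv
  refine ⟨e1, ?_⟩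
  rw [iteratedDeriv_succ, iteratedDeriv_one, e1, e2]

theorem lax_comm (v f : ℝ → ℝ) (hv : ContDiff ℝ (⊤ : ℕ∞) v) (hf : ContDiff ℝ (⊤ : ℕ∞) f)
    (t : ℝ) : laxP v (laxQ v f) t - laxQ v (laxP v f) t =
      (iteratedDeriv 3 v t + 3 * v t * deriv v t) * f t := by
  obtain ⟨F, hF⟩ : ∃ F : ℕ → ℝ → ℝ, F = fun n => iteratedDeriv n f := ⟨_, rfl⟩
  obtain ⟨V, hV⟩ : ∃ V : ℕ → ℝ → ℝ, V = fun n => iteratedDeriv n v := ⟨_, rfl⟩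
  have dF : ∀ n t, HasDerivAt (F n) (F (n + 1) t) t := by
    intro n t; rw [hF]; exact lax_hasDerivAt_iter f hf n t
  have dV : ∀ n t, HasDerivAt (V n) (V (n + 1) t) t := by
    intro n t; rw [hV]; exact lax_hasDerivAt_iter v hv n t
  have eQ : laxQ v f = fun t => 2 * F 2 t + V 0 t * F 0 t := by
    subst hF hV; funext t; simp [laxQ]
  have eP : laxP v f = fun t => 4 * F 3 t + 3 * V 0 t * F 1 t + (3 / 2) * V 1 t * F 0 t := by
    subst hF hV; funext t; simp [laxP]
  have q1 : ∀ t, HasDerivAt (laxQ v f)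
      (2 * F 3 t + (V 1 t * F 0 t + V 0 t * F 1 t)) t := by
    intro t; rw [eQ]
    exact ((dF 2 t).const_mul 2).add ((dV 0 t).mul (dF 0 t))
  have q2 : ∀ t, HasDerivAt (fun t => 2 * F 3 t + (V 1 t * F 0 t + V 0 t * F 1 t))
      (2 * F 4 t + ((V 2 t * F 0 t + V 1 t * F 1 t) + (V 1 t * F 1 t + V 0 t * F 2 t))) t := by
    intro t
    exact ((dF 3 t).const_mul 2).add
      (((dV 1 t).mul (dF 0 t)).add ((dV 0 t).mul (dF 1 t)))
  have q3 : ∀ t, HasDerivAt (fun t => 2 * F 4 t +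
        ((V 2 t * F 0 t + V 1 t * F 1 t) + (V 1 t * F 1 t + V 0 t * F 2 t)))
      (2 * F 5 t + (((V 3 t * F 0 t + V 2 t * F 1 t) + (V 2 t * F 1 t + V 1 t * F 2 t)) +
        ((V 2 t * F 1 t + V 1 t * F 2 t) + (V 1 t * F 2 t + V 0 t * F 3 t)))) t := by
    intro t
    exact ((dF 4 t).const_mul 2).add
      ((((dV 2 t).mul (dF 0 t)).add ((dV 1 t).mul (dF 1 t))).add
        (((dV 1 t).mul (dF 1 t)).add ((dV 0 t).mul (dF 2 t))))
  have p1 : ∀ t, HasDerivAt (laxP v f)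
      (4 * F 4 t + (3 * V 1 t * F 1 t + 3 * V 0 t * F 2 t) +
        ((3 / 2) * V 2 t * F 0 t + (3 / 2) * V 1 t * F 1 t)) t := by
    intro t; rw [eP]
    exact (((dF 3 t).const_mul 4).add (((dV 0 t).const_mul 3).mul (dF 1 t))).add
      (((dV 1 t).const_mul (3 / 2)).mul (dF 0 t))
  have p2 : ∀ t, HasDerivAt (fun t => 4 * F 4 t + (3 * V 1 t * F 1 t + 3 * V 0 t * F 2 t) +
        ((3 / 2) * V 2 t * F 0 t + (3 / 2) * V 1 t * F 1 t))
      (4 * F 5 t + ((3 * V 2 t * F 1 t + 3 * V 1 t * F 2 t) +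
          (3 * V 1 t * F 2 t + 3 * V 0 t * F 3 t)) +
        (((3 / 2) * V 3 t * F 0 t + (3 / 2) * V 2 t * F 1 t) +
          ((3 / 2) * V 2 t * F 1 t + (3 / 2) * V 1 t * F 2 t))) t := by
    intro t
    exact (((dF 4 t).const_mul 4).add ((((dV 1 t).const_mul 3).mul (dF 1 t)).add
        (((dV 0 t).const_mul 3).mul (dF 2 t)))).add
      ((((dV 2 t).const_mul (3 / 2)).mul (dF 0 t)).add
        (((dV 1 t).const_mul (3 / 2)).mul (dF 1 t)))
  obtain ⟨Q1, Q2⟩ := lax_iter2 _ _ _ q1 q2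
  have Q3 := (q3 t).deriv
  rw [← Q2, ← iteratedDeriv_succ] at Q3
  norm_num only at Q3
  obtain ⟨-, P2⟩ := lax_iter2 _ _ _ p1 p2
  have v0 : v t = V 0 t := by simp [hV]
  have v1 : deriv v t = V 1 t := by simp [hV]
  have v3 : iteratedDeriv 3 v t = V 3 t := by simp [hV]
  have f0 : f t = F 0 t := by simp [hF]
  have hPQ : laxP v (laxQ v f) t = 4 * iteratedDeriv 3 (laxQ v f) t +
    3 * v t * deriv (laxQ v f) t + (3 / 2) * deriv v t * laxQ v f t := rfl
  have hQP : laxQ v (laxP v f) t = 2 * iteratedDeriv 2 (laxP v f) t + v t * laxP v f t := rfl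
  rw [hPQ, hQP, Q3, Q1, P2, eQ, eP, v0, v1, v3, f0]
  ring

/-- For smooth `v`, the commutator `[P, Q]` of the Lax pair `P = 4∂³ + 3v∂ + (3/2)v'`,
`Q = 2∂² + v` is multiplication by `v''' + 3vv'`; in particular the string equation
`[P,Q] = g_s` holds iff `v''' + 3vv'` is the constant `g_s`. -/
theorem lax_pair_commutator (v : ℝ → ℝ) (hv : ContDiff ℝ (⊤ : ℕ∞) v) :
    (∀ f : ℝ → ℝ, ContDiff ℝ (⊤ : ℕ∞) f → ∀ t : ℝ,
        laxP v (laxQ v f) t - laxQ v (laxP v f) t =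
          (iteratedDeriv 3 v t + 3 * v t * deriv v t) * f t) ∧
    (∀ gs : ℝ,
      (∀ f : ℝ → ℝ, ContDiff ℝ (⊤ : ℕ∞) f → ∀ t : ℝ,
          laxP v (laxQ v f) t - laxQ v (laxP v f) t = gs * f t) ↔
        (∀ t : ℝ, iteratedDeriv 3 v t + 3 * v t * deriv v t = gs)) := by
  refine ⟨fun f hf t => lax_comm v f hv hf t, fun gs => ⟨fun h t => ?_, fun h f hf t => ?_⟩⟩
  · have h1 := h (fun _ => 1) contDiff_const t
    rw [lax_comm v _ hv contDiff_const t] at h1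
    simpa using h1
  · rw [lax_comm v f hv hf t, h t]
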